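/- arXiv:1906.07437 — 2 statements merged into one kernel-verified Lean document; each statement's English description precedes it below -/
import Mathlib

section
/- (Multi-layer ℓ1 error bound for layer-wise LP inversion.) Let d ≥ 1, let n₀ = k, n₁, …, n_d be positive integers, and let W_i ∈ ℝ^{n_i × n_{i−1}} for i = 1,…,d. Let c₁ ∈ (0,2] and suppose each W_i (m_i, c₁)-extends the ℓ1 norm for some integer m_i > n_{i−1}. Let z* ∈ ℝ^k, define z₀* = z* and z_i* = ReLU(W_i z_{i−1}*) for i = 1,…,d, and set ε_i = (2/c₁)^{d−i}·ε. Suppose that for every i ∈ {1,…,d}, the vector z_i* has at least m_i coordinates strictly greater than 2·ε_i. Let e ∈ ℝ^{n_d} with ‖e‖₁ ≤ ε and x = z_d* + e. Then for every chain of vectors ẑ_d = x, ẑ_{d−1}, …, ẑ₀ in which, for each i = d, d−1, …, 1, setting I_i = {j : (ẑ_i)_j > ε_i}, the vector ẑ_{i−1} satisfies Σ_{j∈I_i} |(W_i ẑ_{i−1})_j − (ẑ_i)_j| ≤ Σ_{j∈I_i} |(W_i z_{i−1}*)_j − (ẑ_i)_j|, one has ‖ẑ₀ − z*‖₁ ≤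 (2/c₁)^d · ε. -/
/-- ReLU applied to a real number. -/
noncomputable def relu (t : ℝ) : ℝ := max t 0

/-- `W` `(m,c₁)`-extends the `ℓ1` norm: for every index set `I` with `|I| ≥ m` and every
`a ∈ ℝ^k`, `‖W_{I,:}a‖₁ ≥ c₁‖a‖₁`. -/
def ExtendsL1 {n k : ℕ} (W : Matrix (Fin n) (Fin k) ℝ) (m : ℕ) (c₁ : ℝ) : Prop :=
  ∀ I : Finset (Fin n), m ≤ I.card →
    ∀ a : Fin k → ℝ, c₁ * ∑ j, |a j| ≤ ∑ i ∈ I, |W.mulVec a i|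

/-!
Suppose the output of a layer is known up to an `ℓ1` error `δ`. Each coordinate is then off by at
most `δ`, so every coordinate of the true output above `2δ` stays above `δ`, and every observed
coordinate above `δ` comes from a positive true one, where ReLU acts as the identity. On the
observed coordinates above `δ` the true input therefore fits with error at most `δ`, and so does
any competitor that fits no worse. The images of the two inputs differ by at most `2δ` there, and
the extension property turns this into an `ℓ1` error of at most `2δ / c` for the input. Descending
through the layers multiplies these factors.
-/

theorem relu_eq_self_of_relu_pos {t : ℝ} (ht : 0 < relu t) : relu t = t :=
  max_eq_left_of_lt ((lt_max_iff.mp ht).resolve_right (lt_irrefl 0))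

theorem sum_abs_sub_le_add {ι α : Type*} [AddCommGroup α] [LinearOrder α] [IsOrderedAddMonoid α]
    (I : Finset ι) (u v y : ι → α) :
    ∑ j ∈ I, |u j - v j| ≤ ∑ j ∈ I, |u j - y j| + ∑ j ∈ I, |v j - y j| := by
  rw [← Finset.sum_add_distrib]
  refine Finset.sum_le_sum fun j _ => ?_
  rw [abs_sub_comm (v j)]
  exact abs_sub_le (u j) (y j) (v j)

theorem ExtendsL1.mul_sum_abs_sub_le {n k m : ℕ} {W : Matrix (Fin n) (Fin k) ℝ} {c : ℝ}
    (hW : ExtendsL1 W m c) {I : Finset (Fin n)} (hI : m ≤ I.card) {a b : Fin k → ℝ}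
    {y : Fin n → ℝ}
    (hfit : ∑ j ∈ I, |W.mulVec a j - y j| ≤ ∑ j ∈ I, |W.mulVec b j - y j|) :
    c * ∑ j, |a j - b j| ≤ 2 * ∑ j ∈ I, |W.mulVec b j - y j| :=
  calc c * ∑ j, |a j - b j|
      ≤ ∑ j ∈ I, |W.mulVec (a - b) j| := hW I hI (a - b)
    _ = ∑ j ∈ I, |W.mulVec a j - W.mulVec b j| := by simp only [Matrix.mulVec_sub, Pi.sub_apply]
    _ ≤ ∑ j ∈ I, |W.mulVec a j - y j| + ∑ j ∈ I, |W.mulVec b j - y j| :=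
        sum_abs_sub_le_add I (W.mulVec a) (W.mulVec b) y
    _ ≤ 2 * ∑ j ∈ I, |W.mulVec b j - y j| := by linarith

theorem card_filter_two_mul_lt_le_card_filter_lt {ι R : Type*} [Fintype ι] [CommRing R]
    [LinearOrder R] [IsStrictOrderedRing R] {δ : R} {y y' : ι → R}
    (hclose : ∀ j, |y' j - y j| ≤ δ) :
    (Finset.univ.filter fun j => 2 * δ < y j).card ≤ (Finset.univ.filter fun j => δ < y' j).card :=
  Finset.card_le_card <| Finset.monotone_filter_right _ fun j _ hj => by
    linarith [(abs_le.mp (hclose j)).1]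

theorem sum_filter_lt_abs_sub_le_sum_abs_sub_relu {ι : Type*} [Fintype ι] {δ : ℝ} {u y : ι → ℝ}
    (hclose : ∀ j, |y j - relu (u j)| ≤ δ) :
    ∑ j ∈ Finset.univ.filter fun j => δ < y j, |u j - y j| ≤ ∑ j, |y j - relu (u j)| := by
  have relu_eq : ∀ j, δ < y j → relu (u j) = u j := fun j hj =>
    relu_eq_self_of_relu_pos (by linarith [(abs_le.mp (hclose j)).2])
  calc ∑ j ∈ Finset.univ.filter fun j => δ < y j, |u j - y j|
      = ∑ j ∈ Finset.univ.filter fun j => δ < y j, |y j - relu (u j)| :=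
        Finset.sum_congr rfl fun j hj => by
          rw [relu_eq j (Finset.mem_filter.mp hj).2, abs_sub_comm]
    _ ≤ ∑ j, |y j - relu (u j)| :=
        Finset.sum_le_univ_sum_of_nonneg fun _ => abs_nonneg _

theorem ExtendsL1.sum_abs_sub_le_of_relu_layer {n k m : ℕ} {W : Matrix (Fin n) (Fin k) ℝ}
    {c δ : ℝ} (hW : ExtendsL1 W m c) (hc : 0 < c) {z z' : Fin k → ℝ} {y : Fin n → ℝ}
    (hbig : m ≤ (Finset.univ.filter fun j => 2 * δ < relu (W.mulVec z j)).card)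
    (herr : ∑ j, |y j - relu (W.mulVec z j)| ≤ δ)
    (hfit : ∑ j ∈ Finset.univ.filter fun j => δ < y j, |W.mulVec z' j - y j| ≤
      ∑ j ∈ Finset.univ.filter fun j => δ < y j, |W.mulVec z j - y j|) :
    ∑ j, |z' j - z j| ≤ 2 / c * δ := by
  have hclose : ∀ j, |y j - relu (W.mulVec z j)| ≤ δ := fun j =>
    (Finset.single_le_sum (f := fun j => |y j - relu (W.mulVec z j)|)
      (fun _ _ => abs_nonneg _) (Finset.mem_univ j)).trans herr
  have hcard : m ≤ (Finset.univ.filter fun j => δ < y j).card :=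
    hbig.trans (card_filter_two_mul_lt_le_card_filter_lt hclose)
  rw [div_mul_eq_mul_div, le_div_iff₀' hc]
  calc c * ∑ j, |z' j - z j|
      ≤ 2 * ∑ j ∈ Finset.univ.filter fun j => δ < y j, |W.mulVec z j - y j| :=
        hW.mul_sum_abs_sub_le hcard hfit
    _ ≤ 2 * ∑ j, |y j - relu (W.mulVec z j)| := by
        gcongr
        exact sum_filter_lt_abs_sub_le_sum_abs_sub_relu hclose
    _ ≤ 2 * δ := by gcongr

theorem multilayer_l1_error_bound_general {d : ℕ} {n : ℕ → ℕ}
    {W : ∀ i : ℕ, Matrix (Fin (n (i + 1))) (Fin (n i)) ℝ} {m : ℕ → ℕ} {c δ : ℕ → ℝ}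
    (hc : ∀ i < d, 0 < c i) (hδ : ∀ i < d, 2 / c i * δ (i + 1) ≤ δ i)
    (hext : ∀ i < d, ExtendsL1 (W i) (m i) (c i))
    {zs zh : ∀ i : ℕ, Fin (n i) → ℝ}
    (hzs : ∀ i < d, zs (i + 1) = fun j => relu ((W i).mulVec (zs i) j))
    (hbig : ∀ i < d, m i ≤ (Finset.univ.filter fun j => 2 * δ (i + 1) < zs (i + 1) j).card)
    (herr : ∑ j, |zh d j - zs d j| ≤ δ d)
    (hfit : ∀ i < d,
      ∑ j ∈ Finset.univ.filter fun j => δ (i + 1) < zh (i + 1) j,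
        |(W i).mulVec (zh i) j - zh (i + 1) j| ≤
      ∑ j ∈ Finset.univ.filter fun j => δ (i + 1) < zh (i + 1) j,
        |(W i).mulVec (zs i) j - zh (i + 1) j|)
    {i : ℕ} (hi : i ≤ d) :
    ∑ j, |zh i j - zs i j| ≤ δ i := by
  induction hi using Nat.decreasingInduction with
  | self => exact herr
  | of_succ i hi ih =>
    have hbig_i := hbig i hi
    rw [hzs i hi] at hbig_i ih
    exact ((hext i hi).sum_abs_sub_le_of_relu_layer (hc i hi) hbig_i ih (hfit i hi)).trans (hδ i hi)

/-- **Multi-layer `ℓ1` error bound for layer-wise LP inversion.**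
Layers are indexed `0,…,d−1`: the `(i+1)`-st layer has weight matrix
`W i ∈ ℝ^{n(i+1) × n(i)}` which `(m i, c₁)`-extends the `ℓ1` norm with `m i > n i`,
`c₁ ∈ (0,2]`.  The ground-truth activations are `zs 0 = z*`,
`zs (i+1) = ReLU(W i · zs i)`, with tolerances `ε_{i+1} = (2/c₁)^{d−(i+1)}·ε`, and each
`zs (i+1)` has at least `m i` coordinates strictly greater than `2·ε_{i+1}`.  Given
`x = zs d + e` with `‖e‖₁ ≤ ε`, any chain `ẑ d = x, …, ẑ 0` in which each `ẑ i` has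
`ℓ1` data-fit on `I_{i+1} = {j : (ẑ (i+1))_j > ε_{i+1}}` no worse than the ground truth
`zs i` satisfies `‖ẑ 0 − z*‖₁ ≤ (2/c₁)^d·ε`. -/
theorem multilayer_l1_error_bound
    (d : ℕ) (hd : 1 ≤ d) (n : ℕ → ℕ)
    (W : ∀ i : ℕ, Matrix (Fin (n (i + 1))) (Fin (n i)) ℝ)
    (m : ℕ → ℕ) (c₁ ε : ℝ) (hc : 0 < c₁) (hc2 : c₁ ≤ 2)
    (hm : ∀ i < d, n i < m i)
    (hext : ∀ i < d, ExtendsL1 (W i) (m i) c₁)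
    (zstar : Fin (n 0) → ℝ) (zs : ∀ j : ℕ, Fin (n j) → ℝ)
    (hzs0 : zs 0 = zstar)
    (hzs : ∀ i < d, zs (i + 1) = fun j => relu ((W i).mulVec (zs i) j))
    (hbig : ∀ i < d,
      m i ≤ (Finset.univ.filter fun j =>
        2 * ((2 / c₁) ^ (d - (i + 1)) * ε) < zs (i + 1) j).card)
    (e : Fin (n d) → ℝ) (he : ∑ j, |e j| ≤ ε)
    (x : Fin (n d) → ℝ) (hx : x = fun j => zs d j + e j)
    (zh : ∀ j : ℕ, Fin (n j) → ℝ) (hzhd : zh d = x)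
    (hopt : ∀ i < d,
      (∑ j ∈ Finset.univ.filter fun j =>
          (2 / c₁) ^ (d - (i + 1)) * ε < zh (i + 1) j,
        |(W i).mulVec (zh i) j - zh (i + 1) j|) ≤
      (∑ j ∈ Finset.univ.filter fun j =>
          (2 / c₁) ^ (d - (i + 1)) * ε < zh (i + 1) j,
        |(W i).mulVec (zs i) j - zh (i + 1) j|)) :
    ∑ j, |zh 0 j - zstar j| ≤ (2 / c₁) ^ d * ε := by
  subst hzs0 hx
  simpa using multilayer_l1_error_bound_general (δ := fun i => (2 / c₁) ^ (d - i) * ε)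
    (fun _ _ => hc)
    (fun i hi => by rw [← mul_assoc, Nat.sub_add_eq, mul_pow_sub_one (Nat.sub_ne_zero_of_lt hi)])
    hext hzs hbig (by simpa [hzhd] using he) hopt d.zero_le
end

section
/- (Exactness of the relaxed LP in the realizable case.) Let W ∈ ℝ^{n×k} with rows w_1,…,w_n, let z* ∈ ℝ^k, and set x = ReLU(Wz*). Consider the linear program: maximize Σ_{i=1}^{n} max(0, x_i)·(w_i·z) over z ∈ ℝ^k subject to w_i·z ≤ x_i for all i. Then z* is feasible, and a feasible z is an optimal solution of this linear program if and only if ReLU(Wz) = x; i.e., the set of optimal solutions is exactly the preimage {z : ReLU(Wz) = x}. -/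
/-!
On the feasible set `y ≤ x`, where `x ≥ 0`, the objective `∑ xᵢ yᵢ` is at most `∑ xᵢ²`. Equality
forces `yᵢ = xᵢ` wherever `xᵢ > 0` and leaves `yᵢ ≤ 0` free wherever `xᵢ = 0`, which is exactly
`ReLU(y) = x`. Realizability of `x` means that the bound is attained, so the optimal points are
those that attain it.
-/

theorem relu_nonneg (t : ℝ) : 0 ≤ relu t := le_max_right t 0

theorem le_relu (t : ℝ) : t ≤ relu t := le_max_left t 0

theorem relu_of_nonpos {t : ℝ} (ht : t ≤ 0) : relu t = 0 := max_eq_right ht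

theorem relu_eq_iff_of_pos {t c : ℝ} (hc : 0 < c) : relu t = c ↔ t = c := by
  grind [relu]

theorem mul_eq_mul_self_iff_relu_eq {t c : ℝ} (hc : 0 ≤ c) (htc : t ≤ c) :
    c * t = c * c ↔ relu t = c := by
  rcases hc.eq_or_lt with rfl | hc_pos
  · simp [relu_of_nonpos htc]
  · rw [mul_right_inj' hc_pos.ne', relu_eq_iff_of_pos hc_pos]

theorem sum_mul_eq_sum_mul_self_iff_relu_eq {ι : Type*} {s : Finset ι} {x y : ι → ℝ}
    (hx : ∀ i ∈ s, 0 ≤ x i) (hyx : ∀ i ∈ s, y i ≤ x i) :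
    ∑ i ∈ s, x i * y i = ∑ i ∈ s, x i * x i ↔ ∀ i ∈ s, relu (y i) = x i := by
  rw [Finset.sum_eq_sum_iff_of_le fun i hi => mul_le_mul_of_nonneg_left (hyx i hi) (hx i hi)]
  exact forall₂_congr fun i hi => mul_eq_mul_self_iff_relu_eq (hx i hi) (hyx i hi)

theorem isMaxOn_iff_eq_of_attained {α β : Type*} [PartialOrder β] {f : α → β} {S : Set α} {M : β}
    {a b : α} (hM : ∀ c ∈ S, f c ≤ M) (ha : a ∈ S) (haM : f a = M) (hb : b ∈ S) :
    IsMaxOn f S b ↔ f b = M := by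
  rw [isMaxOn_iff]
  exact ⟨fun hmax => (hM b hb).antisymm (haM ▸ hmax a ha), fun hbM c hc => hbM ▸ hM c hc⟩

theorem relaxed_LP_exact_realizable_general {ι α : Type*} [Fintype ι] (g : α → ι → ℝ) (a : α)
    (x : ι → ℝ) (hx : x = fun i => relu (g a i)) :
    (∀ i, g a i ≤ x i) ∧
    (∀ z, (∀ i, g z i ≤ x i) →
      ((∀ z', (∀ i, g z' i ≤ x i) →
          ∑ i, max 0 (x i) * g z' i ≤ ∑ i, max 0 (x i) * g z i) ↔
        (∀ i, relu (g z i) = x i))) := by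
  have x_nonneg : ∀ i, 0 ≤ x i := fun i => hx ▸ relu_nonneg (g a i)
  have a_feasible : ∀ i, g a i ≤ x i := fun i => hx ▸ le_relu (g a i)
  have value_le : ∀ z, (∀ i, g z i ≤ x i) → ∑ i, x i * g z i ≤ ∑ i, x i * x i := fun z hz =>
    Finset.sum_le_sum fun i _ => mul_le_mul_of_nonneg_left (hz i) (x_nonneg i)
  have value_eq_iff : ∀ z, (∀ i, g z i ≤ x i) →
      (∑ i, x i * g z i = ∑ i, x i * x i ↔ ∀ i, relu (g z i) = x i) := fun z hz => by
    simpa using sum_mul_eq_sum_mul_self_iff_relu_eq (s := Finset.univ)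
      (fun i _ => x_nonneg i) (fun i _ => hz i)
  have value_a : ∑ i, x i * g a i = ∑ i, x i * x i :=
    (value_eq_iff a a_feasible).2 fun i => (congrFun hx i).symm
  simp only [max_eq_right (x_nonneg _)]
  refine ⟨a_feasible, fun z hz => ?_⟩
  rw [← value_eq_iff z hz]
  exact isMaxOn_iff_eq_of_attained (S := {z | ∀ i, g z i ≤ x i}) value_le a_feasible value_a hz

/-- **Exactness of the relaxed LP in the realizable case.**
Let `x = ReLU(Wz*)` and consider the linear program: maximize
`Σ_i max(0, x_i)·(w_i·z)` subject to `w_i·z ≤ x_i` for all `i`.  Then `z*` is feasible,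
and a feasible `z` is optimal iff `ReLU(Wz) = x`; that is, the optimal set is exactly
the preimage `{z : ReLU(Wz) = x}`. -/
theorem relaxed_LP_exact_realizable
    (n k : ℕ) (W : Matrix (Fin n) (Fin k) ℝ) (zstar : Fin k → ℝ)
    (x : Fin n → ℝ) (hx : x = fun i => relu (W.mulVec zstar i)) :
    (∀ i, W.mulVec zstar i ≤ x i) ∧
    (∀ z : Fin k → ℝ, (∀ i, W.mulVec z i ≤ x i) →
      ((∀ z' : Fin k → ℝ, (∀ i, W.mulVec z' i ≤ x i) →
          ∑ i, max 0 (x i) * W.mulVec z' i ≤ ∑ i, max 0 (x i) * W.mulVec z i) ↔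
        (∀ i, relu (W.mulVec z i) = x i))) :=
  relaxed_LP_exact_realizable_general W.mulVec zstar x hx
end
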